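/- Assume H := H₁ = H₂ is continuous and satisfies (A1), and let (u₁, u₂) be the viscosity solution of (C) with Lipschitz continuous initial data. Define γ(t) := max_{x ∈ 𝕋^n} (u₁(x,t) − u₂(x,t)). Then γ is a viscosity subsolution of the ODE γ'(t) + 2γ(t) = 0 in (0,∞): for every C¹ function φ on (0,∞) and every local maximum point τ > 0 of γ − φ, one has φ'(τ) + 2γ(τ) ≤ 0. -/

import Mathlib

open MeasureTheory Filter Topology Set

noncomputable section

/-- Euclidean space `ℝ^n`; the torus `𝕋^n` is modelled by `ℤ^n`-periodic functions on it. -/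
abbrev En (n : ℕ) : Type := EuclideanSpace ℝ (Fin n)

/-- The integer vector `k ∈ ℤ^n` viewed as an element of `ℝ^n`. -/
def intVec (n : ℕ) (k : Fin n → ℤ) : En n := WithLp.toLp 2 (fun i => (k i : ℝ))

/-- A `ℤ^n`-periodic function on `ℝ^n`, i.e. a function on the torus `𝕋^n`. -/
def ZPeriodic {n : ℕ} (f : En n → ℝ) : Prop :=
  ∀ (x : En n) (k : Fin n → ℤ), f (x + intVec n k) = f x

/-- A Hamiltonian `H : 𝕋^n × ℝ^n → ℝ` (periodic in the first variable). -/
def ZPeriodicH {n : ℕ} (H : En n → En n → ℝ) : Prop :=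
  ∀ (x : En n) (k : Fin n → ℤ) (p : En n), H (x + intVec n k) p = H x p

/-- A function on `𝕋^n × ℝ` (space-time, periodic in space). -/
def ZPeriodicST {n : ℕ} (u : En n × ℝ → ℝ) : Prop :=
  ∀ (x : En n) (k : Fin n → ℤ) (t : ℝ), u (x + intVec n k, t) = u (x, t)

/-- (A1): coercivity, `lim_{r→∞} inf{H(x,p) : x ∈ 𝕋^n, |p| ≥ r} = ∞`. -/
def Coercive {n : ℕ} (H : En n → En n → ℝ) : Prop :=
  ∀ M : ℝ, ∃ r : ℝ, ∀ (x p : En n), r ≤ ‖p‖ → M ≤ H x p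

/-- Coercivity for an `x`-independent Hamiltonian. -/
def CoerciveP {n : ℕ} (H : En n → ℝ) : Prop :=
  ∀ M : ℝ, ∃ r : ℝ, ∀ p : En n, r ≤ ‖p‖ → M ≤ H p

/-- Lipschitz continuity (membership in `W^{1,∞}`). -/
def IsLip {n : ℕ} (f : En n → ℝ) : Prop := ∃ K : NNReal, LipschitzWith K f

/-- Viscosity subsolution inequality for one stationary equation
`H(x, Dw) + c (w - wo) ≤ ρ(x)` of a weakly coupled system. -/
def StatSubIneq {n : ℕ} (H : En n → En n → ℝ) (c : ℝ) (w wo : En n → ℝ) (ρ : En n → ℝ) : Prop :=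
  ∀ φ : En n → ℝ, ContDiff ℝ 1 φ →
    ∀ x₀ : En n, IsLocalMax (fun x => w x - φ x) x₀ →
      H x₀ (gradient φ x₀) + c * (w x₀ - wo x₀) ≤ ρ x₀

/-- Viscosity supersolution inequality for one stationary equation. -/
def StatSuperIneq {n : ℕ} (H : En n → En n → ℝ) (c : ℝ) (w wo : En n → ℝ) (ρ : En n → ℝ) : Prop :=
  ∀ φ : En n → ℝ, ContDiff ℝ 1 φ →
    ∀ x₀ : En n, IsLocalMin (fun x => w x - φ x) x₀ →
      ρ x₀ ≤ H x₀ (gradient φ x₀) + c * (w x₀ - wo x₀)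

/-- Viscosity subsolution of the stationary system
`Hᵢ(x, Dwᵢ) + cᵢ (wᵢ - wⱼ) = ρᵢ(x)`, `i = 1,2`. -/
def CellSub {n : ℕ} (H₁ H₂ : En n → En n → ℝ) (c₁ c₂ : ℝ) (w₁ w₂ : En n → ℝ)
    (ρ₁ ρ₂ : En n → ℝ) : Prop :=
  StatSubIneq H₁ c₁ w₁ w₂ ρ₁ ∧ StatSubIneq H₂ c₂ w₂ w₁ ρ₂

/-- Viscosity supersolution of the stationary system. -/
def CellSuper {n : ℕ} (H₁ H₂ : En n → En n → ℝ) (c₁ c₂ : ℝ) (w₁ w₂ : En n → ℝ)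
    (ρ₁ ρ₂ : En n → ℝ) : Prop :=
  StatSuperIneq H₁ c₁ w₁ w₂ ρ₁ ∧ StatSuperIneq H₂ c₂ w₂ w₁ ρ₂

/-- Viscosity solution (continuous, sub- and supersolution) of the stationary system. -/
def CellSolution {n : ℕ} (H₁ H₂ : En n → En n → ℝ) (c₁ c₂ : ℝ) (v₁ v₂ : En n → ℝ)
    (ρ₁ ρ₂ : En n → ℝ) : Prop :=
  Continuous v₁ ∧ Continuous v₂ ∧
    CellSub H₁ H₂ c₁ c₂ v₁ v₂ ρ₁ ρ₂ ∧ CellSuper H₁ H₂ c₁ c₂ v₁ v₂ ρ₁ ρ₂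

/-- Subsolution of the ergodic problem (E) with constant `c` (coupling constants 1). -/
def ErgSub {n : ℕ} (H₁ H₂ : En n → En n → ℝ) (v₁ v₂ : En n → ℝ) (c : ℝ) : Prop :=
  CellSub H₁ H₂ 1 1 v₁ v₂ (fun _ => c) (fun _ => c)

/-- Supersolution of the ergodic problem (E). -/
def ErgSuper {n : ℕ} (H₁ H₂ : En n → En n → ℝ) (v₁ v₂ : En n → ℝ) (c : ℝ) : Prop :=
  CellSuper H₁ H₂ 1 1 v₁ v₂ (fun _ => c) (fun _ => c)

/-- Viscosity solution of the ergodic problem (E):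
`H₁(x,Dv₁) + v₁ - v₂ = c`, `H₂(x,Dv₂) + v₂ - v₁ = c` on `𝕋^n`. -/
def ErgSolution {n : ℕ} (H₁ H₂ : En n → En n → ℝ) (v₁ v₂ : En n → ℝ) (c : ℝ) : Prop :=
  CellSolution H₁ H₂ 1 1 v₁ v₂ (fun _ => c) (fun _ => c)

/-- Viscosity subsolution inequality for one evolution equation
`∂ₜ u + H(x, Du) + u - uo ≤ 0` in `𝕋^n × (0,∞)`. -/
def EvolSubIneq {n : ℕ} (H : En n → En n → ℝ) (u uo : En n × ℝ → ℝ) : Prop :=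
  ∀ φ : En n × ℝ → ℝ, ContDiff ℝ 1 φ →
    ∀ (x₀ : En n) (t₀ : ℝ), 0 < t₀ →
      IsLocalMax (fun q => u q - φ q) (x₀, t₀) →
      fderiv ℝ φ (x₀, t₀) (0, 1) + H x₀ (gradient (fun y => φ (y, t₀)) x₀)
        + u (x₀, t₀) - uo (x₀, t₀) ≤ 0

/-- Viscosity supersolution inequality for one evolution equation. -/
def EvolSuperIneq {n : ℕ} (H : En n → En n → ℝ) (u uo : En n × ℝ → ℝ) : Prop :=
  ∀ φ : En n × ℝ → ℝ, ContDiff ℝ 1 φ →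
    ∀ (x₀ : En n) (t₀ : ℝ), 0 < t₀ →
      IsLocalMin (fun q => u q - φ q) (x₀, t₀) →
      0 ≤ fderiv ℝ φ (x₀, t₀) (0, 1) + H x₀ (gradient (fun y => φ (y, t₀)) x₀)
        + u (x₀, t₀) - uo (x₀, t₀)

/-- Viscosity subsolution of system (C) (with coupling constants `c₁ = c₂ = 1`). -/
def SysSub {n : ℕ} (H₁ H₂ : En n → En n → ℝ) (u₁ u₂ : En n × ℝ → ℝ) : Prop :=
  EvolSubIneq H₁ u₁ u₂ ∧ EvolSubIneq H₂ u₂ u₁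

/-- Viscosity supersolution of system (C). -/
def SysSuper {n : ℕ} (H₁ H₂ : En n → En n → ℝ) (u₁ u₂ : En n × ℝ → ℝ) : Prop :=
  EvolSuperIneq H₁ u₁ u₂ ∧ EvolSuperIneq H₂ u₂ u₁

/-- Viscosity solution of the Cauchy problem (C): continuous on `𝕋^n × [0,∞)`,
sub- and supersolution, attaining the initial data. -/
def SysSolution {n : ℕ} (H₁ H₂ : En n → En n → ℝ) (u₀₁ u₀₂ : En n → ℝ)
    (u₁ u₂ : En n × ℝ → ℝ) : Prop :=
  ContinuousOn u₁ {q : En n × ℝ | 0 ≤ q.2} ∧ ContinuousOn u₂ {q : En n × ℝ | 0 ≤ q.2} ∧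
    SysSub H₁ H₂ u₁ u₂ ∧ SysSuper H₁ H₂ u₁ u₂ ∧
    (∀ x, u₁ (x, 0) = u₀₁ x) ∧ (∀ x, u₂ (x, 0) = u₀₂ x)

/-- Viscosity subsolution of the single stationary equation `H(x,Dv) ≤ c` on `𝕋^n`. -/
def SingleSub {n : ℕ} (H : En n → En n → ℝ) (v : En n → ℝ) (c : ℝ) : Prop :=
  ∀ φ : En n → ℝ, ContDiff ℝ 1 φ →
    ∀ x₀ : En n, IsLocalMax (fun x => v x - φ x) x₀ → H x₀ (gradient φ x₀) ≤ c

/-- Viscosity supersolution of the single stationary equation `H(x,Dv) ≥ c` on `𝕋^n`. -/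
def SingleSuper {n : ℕ} (H : En n → En n → ℝ) (v : En n → ℝ) (c : ℝ) : Prop :=
  ∀ φ : En n → ℝ, ContDiff ℝ 1 φ →
    ∀ x₀ : En n, IsLocalMin (fun x => v x - φ x) x₀ → c ≤ H x₀ (gradient φ x₀)

/-- Viscosity solution of the single stationary equation `H(x,Dv) = c` on `𝕋^n`. -/
def SingleSolution {n : ℕ} (H : En n → En n → ℝ) (v : En n → ℝ) (c : ℝ) : Prop :=
  Continuous v ∧ SingleSub H v c ∧ SingleSuper H v c

/-- Uniform convergence `u(·,t) → v` on `𝕋^n` as `t → ∞`. -/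
def UnifTendsTo {n : ℕ} (u : En n × ℝ → ℝ) (v : En n → ℝ) : Prop :=
  ∀ ε : ℝ, 0 < ε → ∃ T : ℝ, ∀ t : ℝ, T ≤ t → ∀ x : En n, |u (x, t) - v x| ≤ ε

/-- (A8)⁺ at level `η` with constant `ψ`. -/
def A8plusAt {n : ℕ} (H : En n → En n → ℝ) (η ψ : ℝ) : Prop :=
  ∀ (x p q : En n), η ≤ H x (p + q) → H x q ≤ 0 →
    ∀ μ : ℝ, 0 < μ → μ ≤ 1 → H x (p + q) + ψ * (1 - μ) ≤ μ * H x (μ⁻¹ • p + q)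

/-- (A8)⁻ at level `η` with constant `ψ`. -/
def A8minusAt {n : ℕ} (H : En n → En n → ℝ) (η ψ : ℝ) : Prop :=
  ∀ (x p q : En n), H x (p + q) ≤ -η → 0 ≤ H x q →
    ∀ μ : ℝ, 1 ≤ μ → μ * H x (μ⁻¹ • p + q) ≤ H x (p + q) - ψ * (μ - 1) / μ

/-- (A8)⁺ with threshold `η₀`. -/
def A8plus {n : ℕ} (H : En n → En n → ℝ) (η₀ : ℝ) : Prop :=
  ∀ η : ℝ, 0 < η → η ≤ η₀ → ∃ ψ : ℝ, 0 < ψ ∧ A8plusAt H η ψ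

/-- (A8)⁻ with threshold `η₀`. -/
def A8minus {n : ℕ} (H : En n → En n → ℝ) (η₀ : ℝ) : Prop :=
  ∀ η : ℝ, 0 < η → η ≤ η₀ → ∃ ψ : ℝ, 0 < ψ ∧ A8minusAt H η ψ

/-- The function `F` of the Key Lemma: `F(r) = C r` for `r ≥ 0`, `F(r) = r / C` for `r < 0`. -/
def Fc (C r : ℝ) : ℝ := if 0 ≤ r then C * r else r / C

/-- `α_η⁺(s)` (resp. `β_η⁺(s)` with `u = u₂`):
`min_{x ∈ 𝕋^n, t ≥ s} (u(x,t) - v(x) + η (t-s)) / (u(x,s) - v(x))`. -/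
def alphaPlus {n : ℕ} (u : En n × ℝ → ℝ) (v : En n → ℝ) (η s : ℝ) : ℝ :=
  sInf {r : ℝ | ∃ (x : En n) (t : ℝ), s ≤ t ∧
    r = (u (x, t) - v x + η * (t - s)) / (u (x, s) - v x)}

/-- `α_η⁻(s)` (resp. `β_η⁻(s)` with `u = u₂`):
`max_{x ∈ 𝕋^n, t ≥ s} (u(x,t) - v(x) - η (t-s)) / (u(x,s) - v(x))`. -/
def alphaMinus {n : ℕ} (u : En n × ℝ → ℝ) (v : En n → ℝ) (η s : ℝ) : ℝ :=
  sSup {r : ℝ | ∃ (x : En n) (t : ℝ), s ≤ t ∧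
    r = (u (x, t) - v x - η * (t - s)) / (u (x, s) - v x)}

/-- (A9)⁺. -/
def A9plus {n : ℕ} (H : En n → En n → ℝ) : Prop :=
  ∃ K : Set (En n), IsClosed K ∧ (∀ x ∈ K, ∀ k : Fin n → ℤ, x + intVec n k ∈ K) ∧
    (∀ x ∈ K, (∀ p : En n, 0 ≤ H x p) ∧ ∃ p : En n, H x p = 0) ∧
    (∀ ε : ℝ, 0 < ε → ∃ η₀ : ℝ, 0 < η₀ ∧ ∃ ψ : ℝ → ℝ, (∀ r : ℝ, 0 < r → 0 < ψ r) ∧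
      ∀ η : ℝ, 0 < η → η ≤ η₀ → ∀ (x p q : En n), ε ≤ Metric.infDist x K →
        η ≤ H x (p + q) → H x q ≤ 0 →
        ∀ μ : ℝ, 0 < μ → μ ≤ 1 → H x (p + q) + ψ η * (1 - μ) ≤ μ * H x (μ⁻¹ • p + q))

/-- (A9)⁻. -/
def A9minus {n : ℕ} (H : En n → En n → ℝ) : Prop :=
  ∃ K : Set (En n), IsClosed K ∧ (∀ x ∈ K, ∀ k : Fin n → ℤ, x + intVec n k ∈ K) ∧
    (∀ x ∈ K, (∀ p : En n, 0 ≤ H x p) ∧ ∃ p : En n, H x p = 0) ∧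
    (∀ ε : ℝ, 0 < ε → ∃ η₀ : ℝ, 0 < η₀ ∧ ∃ ψ : ℝ → ℝ, (∀ r : ℝ, 0 < r → 0 < ψ r) ∧
      ∀ η : ℝ, 0 < η → η ≤ η₀ → ∀ (x p q : En n), ε ≤ Metric.infDist x K →
        H x (p + q) ≤ -η → 0 ≤ H x q →
        ∀ μ : ℝ, 1 ≤ μ → μ * H x (μ⁻¹ • p + q) ≤ H x (p + q) - ψ η * (μ - 1) / μ)

/-- (A6): uniform convexity of an `x`-independent Hamiltonian. -/
def UnifConvex {n : ℕ} (H : En n → ℝ) : Prop :=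
  ∃ α : ℝ, 0 < α ∧ ∀ᵐ q : En n ∂volume, DifferentiableAt ℝ H q ∧
    ∀ p : En n, H q + fderiv ℝ H q (p - q) + α * ‖p - q‖ ^ 2 ≤ H p

end

/-!
Doubling of variables, with the limits taken in two stages. Perturbing `φ` by `(t - τ)²` makes `τ`
a strict maximum point of `γ - φ`. For `A, B > 0` consider maximum points of
`u₁(x,t) - u₂(y,s) - φ(t) - B (t - s)² - A |x - y|²`, where `u₁` satisfies the first subsolution
inequality and `u₂` the second supersolution inequality, with the same momentum `p = 2A (x - y)`.

With `B` fixed, the time derivative `2B (t - s)` is bounded, so by coercivity `p` stays bounded as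
`A → ∞`. In the limit `x = y` and both inequalities contain the same term `H(x,p)`; subtracting them
gives `φ'(t) + (u₁ - u₂)(x,t) + (u₁ - u₂)(x,s) ≤ 0`, in which `B` no longer occurs. As `B → ∞`, the
points `t` and `s` tend to `τ` and `x` to a maximum point of `(u₁ - u₂)(·,τ)`.

Limits are taken along an ultrafilter, so that compactness yields convergence without passing to
subsequences.
-/

section Penalization

variable {X : Type*} [TopologicalSpace X] {K : Set X}

theorem exists_tendsto_ultrafilter_of_isCompact {ι : Type*} {𝒰 : Ultrafilter ι}
    (hK : IsCompact K) {z : ι → X} (hz : ∀ᶠ i in 𝒰, z i ∈ K) :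
    ∃ z₀ ∈ K, Tendsto z 𝒰 (𝓝 z₀) :=
  hK.ultrafilter_le_nhds' (𝒰.map z) hz

variable {f g : X → ℝ}

theorem exists_isMaxOn_zeros_of_penalized_maximizers (hK : IsCompact K) (hf : ContinuousOn f K)
    (hg : ContinuousOn g K) (hg_nonneg : ∀ w ∈ K, 0 ≤ g w) (hg_zero : ∃ w ∈ K, g w = 0)
    {𝒰 : Ultrafilter ℝ} (h𝒰 : ↑𝒰 ≤ (atTop : Filter ℝ)) {z : ℝ → X} (hzK : ∀ a, z a ∈ K)
    (hz : ∀ a, IsMaxOn (fun w => f w - a * g w) K (z a)) :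
    ∃ z₀ ∈ K, Tendsto z 𝒰 (𝓝 z₀) ∧ g z₀ = 0 ∧ IsMaxOn f (K ∩ {w | g w = 0}) z₀ := by
  obtain ⟨z₀, hz₀, hlim⟩ :=
    exists_tendsto_ultrafilter_of_isCompact hK (Eventually.of_forall hzK : ∀ᶠ a in 𝒰, z a ∈ K)
  have hlimK : Tendsto z 𝒰 (𝓝[K] z₀) :=
    tendsto_nhdsWithin_iff.2 ⟨hlim, Eventually.of_forall hzK⟩
  have hf_lim : Tendsto (fun a => f (z a)) 𝒰 (𝓝 (f z₀)) := (hf z₀ hz₀).tendsto.comp hlimK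
  have hg_lim : Tendsto (fun a => g (z a)) 𝒰 (𝓝 (g z₀)) := (hg z₀ hz₀).tendsto.comp hlimK
  have hpos : ∀ᶠ a in (𝒰 : Filter ℝ), 0 < a := h𝒰 (eventually_gt_atTop 0)
  have hle : ∀ w ∈ K, g w = 0 → ∀ a, f w ≤ f (z a) - a * g (z a) := fun w hw hgw a => by
    simpa [hgw] using hz a hw
  refine ⟨z₀, hz₀, hlim, le_antisymm ?_ (hg_nonneg z₀ hz₀), fun w hw => ?_⟩
  · obtain ⟨w, hw, hgw⟩ := hg_zero
    have hquot : Tendsto (fun a => (f (z a) - f w) / a) 𝒰 (𝓝 0) :=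
      (hf_lim.sub_const (f w)).div_atTop h𝒰
    refine le_of_tendsto_of_tendsto hg_lim hquot (hpos.mono fun a ha => ?_)
    rw [le_div_iff₀ ha]
    linarith [hle w hw hgw a]
  · refine ge_of_tendsto hf_lim (hpos.mono fun a ha => ?_)
    linarith [hle w hw.1 hw.2 a, mul_nonneg ha.le (hg_nonneg _ (hzK a))]

end Penalization

section Derivatives

variable {E F : Type*} [NormedAddCommGroup E] [NormedSpace ℝ E] [NormedAddCommGroup F]
  [NormedSpace ℝ F]

theorem fderiv_apply_zero_one {Φ : E × ℝ → F} {x : E} {t : ℝ}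
    (hΦ : DifferentiableAt ℝ Φ (x, t)) :
    fderiv ℝ Φ (x, t) (0, 1) = deriv (fun s => Φ (x, s)) t :=
  (hΦ.hasFDerivAt.comp_hasDerivAt t ((hasDerivAt_const t x).prodMk (hasDerivAt_id t))).deriv.symm

theorem fderiv_apply_one_zero {Φ : ℝ × E → F} {t : ℝ} {x : E}
    (hΦ : DifferentiableAt ℝ Φ (t, x)) :
    fderiv ℝ Φ (t, x) (1, 0) = deriv (fun s => Φ (s, x)) t :=
  (hΦ.hasFDerivAt.comp_hasDerivAt t ((hasDerivAt_id t).prodMk (hasDerivAt_const t x))).deriv.symm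

theorem fderiv_add_mul_sub_sq_apply_one_one {φ : ℝ → ℝ} (hφ : Differentiable ℝ φ) (B t s : ℝ) :
    fderiv ℝ (fun p : ℝ × ℝ => φ p.1 + B * (p.1 - p.2) ^ 2) (t, s) (1, 1) = deriv φ t := by
  have hφ_fst : HasFDerivAt (fun p : ℝ × ℝ => φ p.1) _ (t, s) :=
    (hφ t).hasFDerivAt.comp (t, s) hasFDerivAt_fst
  have hsub : HasFDerivAt (fun p : ℝ × ℝ => p.1 - p.2)
      (ContinuousLinearMap.fst ℝ ℝ ℝ - ContinuousLinearMap.snd ℝ ℝ ℝ) (t, s) :=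
    hasFDerivAt_fst.sub hasFDerivAt_snd
  rw [(hφ_fst.fun_add ((hsub.pow 2).const_mul B)).fderiv]
  simp

end Derivatives

section TestFunctions

variable {E : Type*} [NormedAddCommGroup E] [InnerProductSpace ℝ E] {θ : ℝ → ℝ}

theorem contDiff_add_mul_norm_sub_sq (hθ : ContDiff ℝ 1 θ) (A : ℝ) (y : E) :
    ContDiff ℝ 1 (fun q : E × ℝ => θ q.2 + A * ‖q.1 - y‖ ^ 2) :=
  (hθ.comp contDiff_snd).add
    (contDiff_const.mul ((contDiff_fst.sub contDiff_const).norm_sq ℝ))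

theorem fderiv_add_mul_norm_sub_sq_apply_zero_one (hθ : ContDiff ℝ 1 θ) (A t : ℝ) (x y : E) :
    fderiv ℝ (fun q : E × ℝ => θ q.2 + A * ‖q.1 - y‖ ^ 2) (x, t) (0, 1) = deriv θ t := by
  have hdiff := (contDiff_add_mul_norm_sub_sq hθ A y).differentiable one_ne_zero (x, t)
  exact (fderiv_apply_zero_one hdiff).trans (deriv_add_const (A * ‖x - y‖ ^ 2))

theorem gradient_const_add_mul_norm_sub_sq [CompleteSpace E] (c A : ℝ) (x y : E) :
    gradient (fun z => c + A * ‖z - y‖ ^ 2) x = (2 * A) • (x - y) := by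
  refine HasGradientAt.gradient (hasGradientAt_iff_hasFDerivAt.2 ?_)
  refine ((((hasFDerivAt_id x).sub_const y).norm_sq.const_mul A).const_add c).congr_fderiv ?_
  ext v
  simp only [id_eq, map_sub, ContinuousLinearMap.comp_id, smul_apply, sub_apply, coe_innerSL_apply,
    nsmul_eq_mul, Nat.cast_ofNat, smul_eq_mul, map_smul, InnerProductSpace.toDual_apply_apply]
  ring

end TestFunctions

section TestedInequalities

variable {n : ℕ} {H : En n → En n → ℝ} {u uo : En n × ℝ → ℝ} {θ : ℝ → ℝ} {A t : ℝ} {x y : En n}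

theorem EvolSubIneq.le_of_isLocalMax_quadratic (hu : EvolSubIneq H u uo) (hθ : ContDiff ℝ 1 θ)
    (ht : 0 < t)
    (hmax : IsLocalMax (fun q : En n × ℝ => u q - (θ q.2 + A * ‖q.1 - y‖ ^ 2)) (x, t)) :
    deriv θ t + H x ((2 * A) • (x - y)) + u (x, t) - uo (x, t) ≤ 0 := by
  have h := hu _ (contDiff_add_mul_norm_sub_sq hθ A y) x t ht hmax
  rw [fderiv_add_mul_norm_sub_sq_apply_zero_one hθ] at h
  rwa [← gradient_const_add_mul_norm_sub_sq (θ t)]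

theorem EvolSuperIneq.le_of_isLocalMin_quadratic (hu : EvolSuperIneq H u uo)
    (hθ : ContDiff ℝ 1 θ) (ht : 0 < t)
    (hmin : IsLocalMin (fun q : En n × ℝ => u q - (θ q.2 + A * ‖q.1 - y‖ ^ 2)) (x, t)) :
    0 ≤ deriv θ t + H x ((2 * A) • (x - y)) + u (x, t) - uo (x, t) := by
  have h := hu _ (contDiff_add_mul_norm_sub_sq hθ A y) x t ht hmin
  rw [fderiv_add_mul_norm_sub_sq_apply_zero_one hθ] at h
  rwa [← gradient_const_add_mul_norm_sub_sq (θ t)]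

end TestedInequalities

section Torus

variable {n : ℕ} {u u₁ u₂ : En n × ℝ → ℝ} {Q : Set (En n)}

/-- `Q` meets every orbit of `ℤ^n`, i.e. it maps onto the torus `𝕋^n`. A compact such set stands
in for the compactness of `𝕋^n`. -/
def CoversTorus (Q : Set (En n)) : Prop :=
  ∀ x : En n, ∃ k : Fin n → ℤ, x + intVec n k ∈ Q

theorem exists_isCompact_coversTorus (n : ℕ) : ∃ Q : Set (En n), IsCompact Q ∧ CoversTorus Q := by
  refine ⟨WithLp.toLp 2 '' univ.pi fun _ => Icc (0 : ℝ) 1,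
    (isCompact_univ_pi fun _ => isCompact_Icc).image (PiLp.continuous_toLp 2 _), fun x => ?_⟩
  refine ⟨fun i => -⌊x i⌋, fun i => Int.fract (x i), fun i _ =>
    ⟨Int.fract_nonneg _, (Int.fract_lt_one _).le⟩, ?_⟩
  ext i
  simp [intVec, Int.fract, sub_eq_add_neg]

theorem CoversTorus.nonempty (hQ : CoversTorus Q) : Q.Nonempty :=
  let ⟨_, hk⟩ := hQ 0
  ⟨_, hk⟩

/-- The function `γ(t) = max_{x ∈ 𝕋^n} (u₁(x,t) - u₂(x,t))`. -/
noncomputable def maxDiff (u₁ u₂ : En n × ℝ → ℝ) (t : ℝ) : ℝ :=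
  ⨆ x : En n, (u₁ (x, t) - u₂ (x, t))

theorem maxDiff_le_of_coversTorus (hQ : CoversTorus Q) (hu₁ : ZPeriodicST u₁)
    (hu₂ : ZPeriodicST u₂) {t c : ℝ} (h : ∀ x ∈ Q, u₁ (x, t) - u₂ (x, t) ≤ c) :
    maxDiff u₁ u₂ t ≤ c := by
  refine ciSup_le fun x => ?_
  obtain ⟨k, hk⟩ := hQ x
  simpa only [hu₁ x k t, hu₂ x k t] using h _ hk

theorem continuousAt_of_continuousOn_pos (hu : ContinuousOn u {q | 0 < q.2}) {t : ℝ} (ht : 0 < t)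
    (x : En n) : ContinuousAt u (x, t) :=
  hu.continuousAt ((isOpen_lt continuous_const continuous_snd).mem_nhds ht)

theorem le_maxDiff (hu₁ : ZPeriodicST u₁) (hu₂ : ZPeriodicST u₂)
    (hc₁ : ContinuousOn u₁ {q | 0 < q.2}) (hc₂ : ContinuousOn u₂ {q | 0 < q.2}) {t : ℝ}
    (ht : 0 < t) (x : En n) : u₁ (x, t) - u₂ (x, t) ≤ maxDiff u₁ u₂ t := by
  obtain ⟨Q, hQc, hQ⟩ := exists_isCompact_coversTorus n
  have hcont : Continuous fun x => u₁ (x, t) - u₂ (x, t) :=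
    (hc₁.sub hc₂).comp_continuous (by fun_prop : Continuous fun x => (x, t)) fun _ => ht
  obtain ⟨c, hc⟩ := hQc.bddAbove_image hcont.continuousOn
  refine le_ciSup (f := fun x => u₁ (x, t) - u₂ (x, t)) ⟨c, ?_⟩ x
  rintro _ ⟨y, rfl⟩
  obtain ⟨k, hk⟩ := hQ y
  simpa only [hu₁ y k t, hu₂ y k t] using hc (mem_image_of_mem _ hk)

end Torus

section Doubling

variable {n : ℕ} {H : En n → En n → ℝ} {u₁ u₂ : En n × ℝ → ℝ} {Q : Set (En n)} {I : Set ℝ}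
  {θ : ℝ × ℝ → ℝ} {A : ℝ}

/-- The function `u₁(x,t) - u₂(y,s) - θ(t,s)` with both space and time variables doubled, on which
the penalization `A |x - y|²` acts. -/
def doubled (u₁ u₂ : En n × ℝ → ℝ) (θ : ℝ × ℝ → ℝ) (z : (En n × ℝ) × (En n × ℝ)) : ℝ :=
  u₁ z.1 - u₂ z.2 - θ (z.1.2, z.2.2)

/-- The function `u₁(x,t) - u₂(x,s) - θ(t,s)` with only the time variable doubled: the restriction
of `doubled` to `x = y`. -/
def timeDoubled (u₁ u₂ : En n × ℝ → ℝ) (θ : ℝ × ℝ → ℝ) (q : En n × ℝ × ℝ) : ℝ :=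
  u₁ (q.1, q.2.1) - u₂ (q.1, q.2.2) - θ q.2

/-- A domain for `doubled` that is compact if `Q` and `I` are; for `Q` covering the torus it
contains, up to a common integer translation of `x` and `y`, every `((x, t), (y, s))` with
`|x - y| ≤ 1` and `t, s ∈ I`. -/
def doubledDomain (Q : Set (En n)) (I : Set ℝ) : Set ((En n × ℝ) × (En n × ℝ)) :=
  (Q ×ˢ I) ×ˢ (Metric.cthickening 1 Q ×ˢ I)

theorem isCompact_doubledDomain (hQ : IsCompact Q) (hI : IsCompact I) :
    IsCompact (doubledDomain Q I) :=
  (hQ.prod hI).prod (hQ.cthickening.prod hI)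

theorem mk_mem_doubledDomain {x : En n} {t s : ℝ} (hx : x ∈ Q) (ht : t ∈ I) (hs : s ∈ I) :
    ((x, t), (x, s)) ∈ doubledDomain Q I :=
  ⟨⟨hx, ht⟩, Metric.self_subset_cthickening Q hx, hs⟩

theorem continuousOn_doubled (hc₁ : ContinuousOn u₁ {q | 0 < q.2})
    (hc₂ : ContinuousOn u₂ {q | 0 < q.2}) (hθ : Continuous θ) (hI : I ⊆ Ioi 0) :
    ContinuousOn (doubled u₁ u₂ θ) (doubledDomain Q I) :=
  ((hc₁.comp continuousOn_fst fun _ hz => hI hz.1.2).sub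
    (hc₂.comp continuousOn_snd fun _ hz => hI hz.2.2)).sub (by fun_prop)

theorem continuousOn_timeDoubled (hc₁ : ContinuousOn u₁ {q | 0 < q.2})
    (hc₂ : ContinuousOn u₂ {q | 0 < q.2}) (hθ : Continuous θ) (hI : I ⊆ Ioi 0) :
    ContinuousOn (timeDoubled u₁ u₂ θ) (Q ×ˢ I ×ˢ I) :=
  ((hc₁.comp (by fun_prop) fun _ hq => hI hq.2.1).sub
    (hc₂.comp (by fun_prop) fun _ hq => hI hq.2.2)).sub (by fun_prop)

theorem isLocalMax_doubled_of_isMaxOn_doubledDomain (hQ : CoversTorus Q) (hu₁ : ZPeriodicST u₁)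
    (hu₂ : ZPeriodicST u₂) {z : (En n × ℝ) × (En n × ℝ)}
    (hz : IsMaxOn (fun w => doubled u₁ u₂ θ w - A * ‖w.1.1 - w.2.1‖ ^ 2) (doubledDomain Q I) z)
    (hdist : ‖z.1.1 - z.2.1‖ < 1) (ht : I ∈ 𝓝 z.1.2) (hs : I ∈ 𝓝 z.2.2) :
    IsLocalMax (fun w => doubled u₁ u₂ θ w - A * ‖w.1.1 - w.2.1‖ ^ 2) z := by
  have hdist_ev : ∀ᶠ w in 𝓝 z, ‖w.1.1 - w.2.1‖ < 1 :=
    ContinuousAt.eventually_lt (by fun_prop) continuousAt_const hdist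
  have ht_ev : ∀ᶠ w in 𝓝 z, w.1.2 ∈ I :=
    (by fun_prop : ContinuousAt (fun w : (En n × ℝ) × (En n × ℝ) => w.1.2) z) ht
  have hs_ev : ∀ᶠ w in 𝓝 z, w.2.2 ∈ I :=
    (by fun_prop : ContinuousAt (fun w : (En n × ℝ) × (En n × ℝ) => w.2.2) z) hs
  filter_upwards [hdist_ev, ht_ev, hs_ev] with ⟨⟨x, t⟩, y, s⟩ hxy hwt hws
  obtain ⟨k, hk⟩ := hQ x
  have hyk : y + intVec n k ∈ Metric.cthickening 1 Q := by
    refine Metric.mem_cthickening_of_dist_le _ _ _ _ hk ?_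
    rw [dist_add_right, dist_comm, dist_eq_norm]
    exact hxy.le
  have hle : doubled u₁ u₂ θ ((x + intVec n k, t), (y + intVec n k, s))
      - A * ‖x + intVec n k - (y + intVec n k)‖ ^ 2 ≤ _ := hz ⟨⟨hk, hwt⟩, hyk, hws⟩
  simpa only [doubled, hu₁ x k t, hu₂ y k s, add_sub_add_right_eq_sub] using hle

theorem EvolSubIneq.le_of_isLocalMax_doubled (hsub : EvolSubIneq H u₁ u₂)
    (hθ : ContDiff ℝ 1 θ) {z : (En n × ℝ) × (En n × ℝ)} (ht : 0 < z.1.2)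
    (hz : IsLocalMax (fun w => doubled u₁ u₂ θ w - A * ‖w.1.1 - w.2.1‖ ^ 2) z) :
    fderiv ℝ θ (z.1.2, z.2.2) (1, 0) + u₁ z.1 - u₂ z.1
      + H z.1.1 ((2 * A) • (z.1.1 - z.2.1)) ≤ 0 := by
  obtain ⟨⟨x, t⟩, y, s⟩ := z
  have hmax : IsLocalMax (fun q : En n × ℝ => u₁ q - (θ (q.2, s) + A * ‖q.1 - y‖ ^ 2)) (x, t) := by
    filter_upwards [(by fun_prop : ContinuousAt (fun q : En n × ℝ => (q, (y, s))) (x, t)) hz]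
      with q hq
    simp only [doubled, mem_preimage, mem_ofPred_eq] at hq
    linarith
  have h := hsub.le_of_isLocalMax_quadratic (θ := fun t' => θ (t', s)) (by fun_prop) ht hmax
  rw [← fderiv_apply_one_zero (hθ.differentiable one_ne_zero _)] at h
  linarith

theorem EvolSuperIneq.le_of_isLocalMax_doubled (hsup : EvolSuperIneq H u₂ u₁)
    (hθ : ContDiff ℝ 1 θ) {z : (En n × ℝ) × (En n × ℝ)} (hs : 0 < z.2.2)
    (hz : IsLocalMax (fun w => doubled u₁ u₂ θ w - A * ‖w.1.1 - w.2.1‖ ^ 2) z) :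
    0 ≤ -fderiv ℝ θ (z.1.2, z.2.2) (0, 1) + u₂ z.2 - u₁ z.2
      + H z.2.1 ((2 * A) • (z.1.1 - z.2.1)) := by
  obtain ⟨⟨x, t⟩, y, s⟩ := z
  have hmin : IsLocalMin (fun q : En n × ℝ => u₂ q - (-θ (t, q.2) + -A * ‖q.1 - x‖ ^ 2))
      (y, s) := by
    filter_upwards [(by fun_prop : ContinuousAt (fun q : En n × ℝ => ((x, t), q)) (y, s)) hz]
      with q hq
    simp only [doubled, mem_preimage, mem_ofPred_eq] at hq
    rw [norm_sub_rev y x, norm_sub_rev q.1 x]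
    linarith
  have h := hsup.le_of_isLocalMin_quadratic (θ := fun s' => -θ (t, s')) (by fun_prop) hs hmin
  have hgrad : (2 * -A) • (y - x) = (2 * A) • (x - y) := by
    rw [← neg_sub x y, smul_neg, ← neg_smul, mul_neg, neg_neg]
  rw [deriv.fun_neg, ← fderiv_apply_zero_one (hθ.differentiable one_ne_zero _), hgrad] at h
  linarith

-- Coercivity bounds the momenta `p i`, so they converge along `𝒰` and `H` drops out in the limit.
theorem Coercive.le_of_tendsto_of_add_le_zero_of_zero_le_add (hcoer : Coercive H)
    (hcont : Continuous fun q : En n × En n => H q.1 q.2) {ι : Type*} {𝒰 : Ultrafilter ι}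
    {x y p : ι → En n} {a b : ι → ℝ} {x₀ : En n} {a₀ b₀ : ℝ}
    (hx : Tendsto x 𝒰 (𝓝 x₀)) (hy : Tendsto y 𝒰 (𝓝 x₀))
    (ha : Tendsto a 𝒰 (𝓝 a₀)) (hb : Tendsto b 𝒰 (𝓝 b₀))
    (hsub : ∀ᶠ i in 𝒰, a i + H (x i) (p i) ≤ 0) (hsup : ∀ᶠ i in 𝒰, 0 ≤ b i + H (y i) (p i)) :
    a₀ ≤ b₀ := by
  obtain ⟨r, hr⟩ := hcoer (1 - a₀)
  have hp_mem : ∀ᶠ i in 𝒰, p i ∈ Metric.closedBall 0 r := by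
    filter_upwards [hsub, ha.eventually_const_lt (sub_one_lt a₀)] with i hi hai
    rw [mem_closedBall_zero_iff]
    by_contra! hlt
    linarith [hr (x i) (p i) hlt.le]
  obtain ⟨p₀, -, hp⟩ := exists_tendsto_ultrafilter_of_isCompact (isCompact_closedBall 0 r) hp_mem
  have hHx : Tendsto (fun i => H (x i) (p i)) 𝒰 (𝓝 (H x₀ p₀)) :=
    (hcont.tendsto (x₀, p₀)).comp (hx.prodMk_nhds hp)
  have hHy : Tendsto (fun i => H (y i) (p i)) 𝒰 (𝓝 (H x₀ p₀)) :=
    (hcont.tendsto (x₀, p₀)).comp (hy.prodMk_nhds hp)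
  have hle : a₀ + H x₀ p₀ ≤ 0 := le_of_tendsto (ha.add hHx) hsub
  have hge : 0 ≤ b₀ + H x₀ p₀ := ge_of_tendsto (hb.add hHy) hsup
  linarith

theorem exists_isMaxOn_doubled_penalized (hc₁ : ContinuousOn u₁ {q | 0 < q.2})
    (hc₂ : ContinuousOn u₂ {q | 0 < q.2}) (hθ : Continuous θ) (hQc : IsCompact Q)
    (hQne : Q.Nonempty) (hIc : IsCompact I) (hIne : I.Nonempty) (hIpos : I ⊆ Ioi 0) (A : ℝ) :
    ∃ z ∈ doubledDomain Q I,
      IsMaxOn (fun w => doubled u₁ u₂ θ w - A * ‖w.1.1 - w.2.1‖ ^ 2) (doubledDomain Q I) z := by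
  obtain ⟨x, hx⟩ := hQne
  obtain ⟨t, ht⟩ := hIne
  exact (isCompact_doubledDomain hQc hIc).exists_isMaxOn ⟨_, mk_mem_doubledDomain hx ht ht⟩
    ((continuousOn_doubled hc₁ hc₂ hθ hIpos).sub (by fun_prop))

theorem fderiv_add_diff_add_diff_le_zero_of_tendsto
    (hHcont : Continuous fun q : En n × En n => H q.1 q.2) (hHcoer : Coercive H)
    (hu₁ : ZPeriodicST u₁) (hu₂ : ZPeriodicST u₂)
    (hc₁ : ContinuousOn u₁ {q | 0 < q.2}) (hc₂ : ContinuousOn u₂ {q | 0 < q.2})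
    (hsub : EvolSubIneq H u₁ u₂) (hsup : EvolSuperIneq H u₂ u₁) (hθ : ContDiff ℝ 1 θ)
    (hQ : CoversTorus Q) (hIpos : I ⊆ Ioi 0) {𝒰 : Ultrafilter ℝ}
    {z : ℝ → (En n × ℝ) × (En n × ℝ)} {x : En n} {t s : ℝ} (ht : I ∈ 𝓝 t) (hs : I ∈ 𝓝 s)
    (hz : ∀ A, IsMaxOn (fun w => doubled u₁ u₂ θ w - A * ‖w.1.1 - w.2.1‖ ^ 2)
      (doubledDomain Q I) (z A))
    (hlim : Tendsto z 𝒰 (𝓝 ((x, t), (x, s)))) :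
    fderiv ℝ θ (t, s) (1, 1) + (u₁ (x, t) - u₂ (x, t)) + (u₁ (x, s) - u₂ (x, s)) ≤ 0 := by
  obtain ⟨hlim₁, hlim₂⟩ := (Prod.tendsto_iff _ _).1 hlim
  obtain ⟨hlim_x, hlim_t⟩ := (Prod.tendsto_iff _ _).1 hlim₁
  obtain ⟨hlim_y, hlim_s⟩ := (Prod.tendsto_iff _ _).1 hlim₂
  have hcont_at {u : En n × ℝ → ℝ} (hc : ContinuousOn u {q | 0 < q.2}) {r : ℝ} (hr : I ∈ 𝓝 r) :
      ContinuousAt u (x, r) :=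
    continuousAt_of_continuousOn_pos hc (hIpos (mem_of_mem_nhds hr)) x
  have hlim_θ (v : ℝ × ℝ) : Tendsto (fun A => fderiv ℝ θ ((z A).1.2, (z A).2.2) v) 𝒰
      (𝓝 (fderiv ℝ θ (t, s) v)) :=
    (((hθ.continuous_fderiv one_ne_zero).clm_apply continuous_const).tendsto (t, s)).comp
      (hlim_t.prodMk_nhds hlim_s)
  have ht_ev : ∀ᶠ A in 𝒰, I ∈ 𝓝 (z A).1.2 := hlim_t (eventually_mem_nhds_iff.2 ht)
  have hs_ev : ∀ᶠ A in 𝒰, I ∈ 𝓝 (z A).2.2 := hlim_s (eventually_mem_nhds_iff.2 hs)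
  have hdist_ev : ∀ᶠ A in 𝒰, ‖(z A).1.1 - (z A).2.1‖ < 1 :=
    (hlim_x.sub hlim_y).norm.eventually_lt_const (by simp)
  have hloc := (hdist_ev.and (ht_ev.and hs_ev)).mono fun A ⟨hd, hAt, hAs⟩ =>
    isLocalMax_doubled_of_isMaxOn_doubledDomain hQ hu₁ hu₂ (hz A) hd hAt hAs
  have hle := hHcoer.le_of_tendsto_of_add_le_zero_of_zero_le_add hHcont hlim_x hlim_y
    (((hlim_θ (1, 0)).add ((hcont_at hc₁ ht).tendsto.comp hlim₁)).sub
      ((hcont_at hc₂ ht).tendsto.comp hlim₁))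
    (((hlim_θ (0, 1)).neg.add ((hcont_at hc₂ hs).tendsto.comp hlim₂)).sub
      ((hcont_at hc₁ hs).tendsto.comp hlim₂))
    (hloc.mp <| ht_ev.mono fun A hAt hA =>
      hsub.le_of_isLocalMax_doubled hθ (hIpos (mem_of_mem_nhds hAt)) hA)
    (hloc.mp <| hs_ev.mono fun A hAs hA =>
      hsup.le_of_isLocalMax_doubled hθ (hIpos (mem_of_mem_nhds hAs)) hA)
  have hdir : fderiv ℝ θ (t, s) (1, 1) = fderiv ℝ θ (t, s) (1, 0) + fderiv ℝ θ (t, s) (0, 1) := by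
    rw [← map_add, Prod.mk_add_mk, add_zero, zero_add]
  linarith

theorem exists_isMaxOn_timeDoubled_fderiv_le_zero
    (hHcont : Continuous fun q : En n × En n => H q.1 q.2) (hHcoer : Coercive H)
    (hu₁ : ZPeriodicST u₁) (hu₂ : ZPeriodicST u₂)
    (hc₁ : ContinuousOn u₁ {q | 0 < q.2}) (hc₂ : ContinuousOn u₂ {q | 0 < q.2})
    (hsub : EvolSubIneq H u₁ u₂) (hsup : EvolSuperIneq H u₂ u₁) (hθ : ContDiff ℝ 1 θ)
    (hQc : IsCompact Q) (hQ : CoversTorus Q) (hIc : IsCompact I) (hIne : I.Nonempty)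
    (hIpos : I ⊆ Ioi 0) :
    ∃ q ∈ Q ×ˢ I ×ˢ I, IsMaxOn (timeDoubled u₁ u₂ θ) (Q ×ˢ I ×ˢ I) q ∧
      (I ∈ 𝓝 q.2.1 → I ∈ 𝓝 q.2.2 →
        fderiv ℝ θ q.2 (1, 1) + (u₁ (q.1, q.2.1) - u₂ (q.1, q.2.1))
          + (u₁ (q.1, q.2.2) - u₂ (q.1, q.2.2)) ≤ 0) := by
  choose z hzK hz using
    exists_isMaxOn_doubled_penalized hc₁ hc₂ hθ.continuous hQc hQ.nonempty hIc hIne hIpos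
  obtain ⟨x, hx⟩ := hQ.nonempty
  obtain ⟨t, ht⟩ := hIne
  obtain ⟨⟨⟨x₀, t₀⟩, y₀, s₀⟩, hmem, hlim, hpen, hmax⟩ :=
    exists_isMaxOn_zeros_of_penalized_maximizers (isCompact_doubledDomain hQc hIc)
      (continuousOn_doubled hc₁ hc₂ hθ.continuous hIpos) (by fun_prop) (fun _ _ => sq_nonneg _)
      ⟨_, mk_mem_doubledDomain hx ht ht, by simp⟩ (Ultrafilter.of_le atTop) hzK hz
  obtain rfl : x₀ = y₀ := by simpa [sub_eq_zero] using hpen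
  refine ⟨(x₀, t₀, s₀), ⟨hmem.1.1, hmem.1.2, hmem.2.2⟩, fun ⟨x', t', s'⟩ ⟨hx', ht', hs'⟩ => ?_,
    fun ht₀ hs₀ => fderiv_add_diff_add_diff_le_zero_of_tendsto hHcont hHcoer hu₁ hu₂ hc₁ hc₂ hsub
      hsup hθ hQ hIpos ht₀ hs₀ hz hlim⟩
  exact hmax ⟨mk_mem_doubledDomain hx' ht' hs', by simp⟩

end Doubling

section Subsolution

variable {n : ℕ} {H : En n → En n → ℝ} {u₁ u₂ : En n × ℝ → ℝ} {Q : Set (En n)} {I : Set ℝ}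
  {φ : ℝ → ℝ} {τ : ℝ}

theorem eq_and_diff_eq_maxDiff_of_isMaxOn_timeDoubled (hu₁ : ZPeriodicST u₁)
    (hu₂ : ZPeriodicST u₂) (hc₁ : ContinuousOn u₁ {q | 0 < q.2})
    (hc₂ : ContinuousOn u₂ {q | 0 < q.2}) (hQ : CoversTorus Q) (hIpos : I ⊆ Ioi 0) (hτ : τ ∈ I)
    (hstrict : ∀ t ∈ I, t ≠ τ → maxDiff u₁ u₂ t - φ t < maxDiff u₁ u₂ τ - φ τ)
    {x : En n} {t : ℝ} (ht : t ∈ I)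
    (hmax : IsMaxOn (timeDoubled u₁ u₂ fun p => φ p.1)
      (Q ×ˢ I ×ˢ I ∩ {q | (q.2.1 - q.2.2) ^ 2 = 0}) (x, t, t)) :
    t = τ ∧ u₁ (x, τ) - u₂ (x, τ) = maxDiff u₁ u₂ τ := by
  have hτ_le : maxDiff u₁ u₂ τ ≤ u₁ (x, t) - u₂ (x, t) - φ t + φ τ := by
    refine maxDiff_le_of_coversTorus hQ hu₁ hu₂ fun y hy => sub_le_iff_le_add.1 ?_
    exact hmax (show (y, τ, τ) ∈ _ from ⟨⟨hy, hτ, hτ⟩, by simp⟩)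
  have hle_t : u₁ (x, t) - u₂ (x, t) ≤ maxDiff u₁ u₂ t := le_maxDiff hu₁ hu₂ hc₁ hc₂ (hIpos ht) x
  obtain rfl : t = τ := by
    by_contra hne
    linarith [hstrict t ht hne]
  exact ⟨rfl, by linarith⟩

theorem deriv_add_two_mul_diff_le_zero_of_tendsto (hc₁ : ContinuousOn u₁ {q | 0 < q.2})
    (hc₂ : ContinuousOn u₂ {q | 0 < q.2}) (hφ : ContDiff ℝ 1 φ) (hτ : 0 < τ)
    {l : Filter ℝ} [NeBot l] {q : ℝ → En n × ℝ × ℝ} {x : En n}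
    (hlim : Tendsto q l (𝓝 (x, τ, τ)))
    (hq : ∀ᶠ B in l,
      fderiv ℝ (fun p : ℝ × ℝ => φ p.1 + B * (p.1 - p.2) ^ 2) (q B).2 (1, 1)
        + (u₁ ((q B).1, (q B).2.1) - u₂ ((q B).1, (q B).2.1))
        + (u₁ ((q B).1, (q B).2.2) - u₂ ((q B).1, (q B).2.2)) ≤ 0) :
    deriv φ τ + 2 * (u₁ (x, τ) - u₂ (x, τ)) ≤ 0 := by
  obtain ⟨hlim_x, hlim_ts⟩ := (Prod.tendsto_iff _ _).1 hlim
  obtain ⟨hlim_t, hlim_s⟩ := (Prod.tendsto_iff _ _).1 hlim_ts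
  have hdiff : Tendsto (fun p => u₁ p - u₂ p) (𝓝 (x, τ)) (𝓝 (u₁ (x, τ) - u₂ (x, τ))) :=
    continuousAt_of_continuousOn_pos (hc₁.sub hc₂) hτ x
  have hderiv : Tendsto (fun B => deriv φ (q B).2.1) l (𝓝 (deriv φ τ)) :=
    ((hφ.continuous_deriv le_rfl).tendsto τ).comp hlim_t
  simp only [fderiv_add_mul_sub_sq_apply_one_one (hφ.differentiable one_ne_zero)] at hq
  have hle := le_of_tendsto ((hderiv.add (hdiff.comp (hlim_x.prodMk_nhds hlim_t))).add
    (hdiff.comp (hlim_x.prodMk_nhds hlim_s))) hq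
  linarith

theorem deriv_add_two_mul_maxDiff_le_zero_of_strict_max
    (hHcont : Continuous fun q : En n × En n => H q.1 q.2) (hHcoer : Coercive H)
    (hu₁ : ZPeriodicST u₁) (hu₂ : ZPeriodicST u₂)
    (hc₁ : ContinuousOn u₁ {q | 0 < q.2}) (hc₂ : ContinuousOn u₂ {q | 0 < q.2})
    (hsub : EvolSubIneq H u₁ u₂) (hsup : EvolSuperIneq H u₂ u₁) (hφ : ContDiff ℝ 1 φ)
    (hIc : IsCompact I) (hIpos : I ⊆ Ioi 0) (hI : I ∈ 𝓝 τ)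
    (hstrict : ∀ t ∈ I, t ≠ τ → maxDiff u₁ u₂ t - φ t < maxDiff u₁ u₂ τ - φ τ) :
    deriv φ τ + 2 * maxDiff u₁ u₂ τ ≤ 0 := by
  obtain ⟨Q, hQc, hQ⟩ := exists_isCompact_coversTorus n
  have hτ : τ ∈ I := mem_of_mem_nhds hI
  choose q hqK hq hq_ineq using fun B : ℝ =>
    exists_isMaxOn_timeDoubled_fderiv_le_zero hHcont hHcoer hu₁ hu₂ hc₁ hc₂ hsub hsup
      (θ := fun p => φ p.1 + B * (p.1 - p.2) ^ 2) (by fun_prop) hQc hQ hIc ⟨τ, hτ⟩ hIpos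
  have hq_pen (B : ℝ) : IsMaxOn (fun w => timeDoubled u₁ u₂ (fun p => φ p.1) w
      - B * (w.2.1 - w.2.2) ^ 2) (Q ×ˢ I ×ˢ I) (q B) := fun w hw => by
    simpa only [timeDoubled, mem_ofPred_eq, sub_add_eq_sub_sub] using hq B hw
  obtain ⟨x', hx'⟩ := hQ.nonempty
  obtain ⟨⟨x, t, s⟩, ⟨-, ht, -⟩, hlim, hpen, hmax⟩ :=
    exists_isMaxOn_zeros_of_penalized_maximizers (hQc.prod (hIc.prod hIc))
      (continuousOn_timeDoubled hc₁ hc₂ (by fun_prop) hIpos) (by fun_prop)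
      (fun _ _ => sq_nonneg _) ⟨(x', τ, τ), ⟨hx', hτ, hτ⟩, by simp⟩ (Ultrafilter.of_le atTop)
      hqK hq_pen
  obtain rfl : t = s := by simpa [sub_eq_zero] using hpen
  obtain ⟨(ht_eq : t = τ), hx⟩ := eq_and_diff_eq_maxDiff_of_isMaxOn_timeDoubled hu₁ hu₂ hc₁ hc₂ hQ
    hIpos hτ hstrict ht hmax
  rw [ht_eq] at hlim
  rw [← hx]
  refine deriv_add_two_mul_diff_le_zero_of_tendsto hc₁ hc₂ hφ (hIpos hτ) hlim ?_
  have hI_nhds : ∀ᶠ t in 𝓝 τ, I ∈ 𝓝 t := eventually_mem_nhds_iff.2 hI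
  have hI_ev : ∀ᶠ p : En n × ℝ × ℝ in 𝓝 (x, τ, τ), I ∈ 𝓝 p.2.1 ∧ I ∈ 𝓝 p.2.2 :=
    (hI_nhds.prod_nhds hI_nhds).prod_inr_nhds x
  exact (hlim.eventually hI_ev).mono fun B hB => hq_ineq B hB.1 hB.2

theorem stmt14_general (hHcont : Continuous fun q : En n × En n => H q.1 q.2)
    (hHcoer : Coercive H) (hu₁ : ZPeriodicST u₁) (hu₂ : ZPeriodicST u₂)
    (hc₁ : ContinuousOn u₁ {q | 0 < q.2}) (hc₂ : ContinuousOn u₂ {q | 0 < q.2})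
    (hsub : EvolSubIneq H u₁ u₂) (hsup : EvolSuperIneq H u₂ u₁) (hφ : ContDiff ℝ 1 φ)
    (hτ : 0 < τ) (hmax : IsLocalMax (fun t => maxDiff u₁ u₂ t - φ t) τ) :
    deriv φ τ + 2 * maxDiff u₁ u₂ τ ≤ 0 := by
  obtain ⟨I, hI, hI_sub, hIc⟩ := local_compact_nhds (hmax.and (Ioi_mem_nhds hτ))
  have hderiv : deriv (fun t => φ t + (t - τ) ^ 2) τ = deriv φ τ := by
    have hsq : HasDerivAt (fun t => (t - τ) ^ 2) _ τ := ((hasDerivAt_id τ).sub_const τ).pow 2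
    simpa using ((hφ.differentiable one_ne_zero τ).hasDerivAt.fun_add hsq).deriv
  rw [← hderiv]
  refine deriv_add_two_mul_maxDiff_le_zero_of_strict_max hHcont hHcoer hu₁ hu₂ hc₁ hc₂ hsub hsup
    (by fun_prop) hIc (fun t ht => (hI_sub ht).2) hI fun t ht hne => ?_
  have hle : maxDiff u₁ u₂ t - φ t ≤ maxDiff u₁ u₂ τ - φ τ := (hI_sub ht).1
  have hsq : 0 < (t - τ) ^ 2 := sq_pos_of_ne_zero (sub_ne_zero.2 hne)
  rw [sub_self τ]
  linarith

end Subsolution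

/-- Lemma 5.2: `γ(t) = max_x (u₁ - u₂)(x,t)` is a viscosity subsolution of
`γ' + 2γ = 0` in `(0,∞)`. -/
theorem stmt14 (n : ℕ) (hn : 1 ≤ n) (H : En n → En n → ℝ)
    (hHcont : Continuous fun q : En n × En n => H q.1 q.2)
    (hHper : ZPeriodicH H) (hHcoer : Coercive H)
    (u₀₁ u₀₂ : En n → ℝ) (hu₀₁ : IsLip u₀₁) (hu₀₂ : IsLip u₀₂)
    (hu₀₁per : ZPeriodic u₀₁) (hu₀₂per : ZPeriodic u₀₂)
    (u₁ u₂ : En n × ℝ → ℝ) (hu₁per : ZPeriodicST u₁) (hu₂per : ZPeriodicST u₂)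
    (hsol : SysSolution H H u₀₁ u₀₂ u₁ u₂) :
    ∀ φ : ℝ → ℝ, ContDiff ℝ 1 φ → ∀ τ : ℝ, 0 < τ →
      IsLocalMax (fun t => (⨆ x : En n, (u₁ (x, t) - u₂ (x, t))) - φ t) τ →
      deriv φ τ + 2 * (⨆ x : En n, (u₁ (x, τ) - u₂ (x, τ))) ≤ 0 := by
  obtain ⟨hc₁, hc₂, ⟨hsub, -⟩, ⟨-, hsup⟩, -, -⟩ := hsol
  have hpos : {q : En n × ℝ | 0 < q.2} ⊆ {q | 0 ≤ q.2} :=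
    fun q (hq : 0 < q.2) => show 0 ≤ q.2 from hq.le
  exact fun _ hφ _ hτ hmax => stmt14_general hHcont hHcoer hu₁per hu₂per (hc₁.mono hpos)
    (hc₂.mono hpos) hsub hsup hφ hτ hmax
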